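/- arXiv:1807.00642 — 2 statements merged into one kernel-verified Lean document; each statement's English description precedes it below -/
import Mathlib

section
/- Fix a form T ∈ ℙ(Symᵈ(ℂⁿ⁺¹)) and a minimal decomposition A ⊂ ℙⁿ of T. Assume that ℓ(A) ≤ d and that A contains no aligned subset (subset of points lying on a projective line) of cardinality d/2. Then T has rank ℓ(A) and is identifiable: every decomposition B of T with ℓ(B) ≤ ℓ(A) equals A. -/
/-!
Suppose `∑ c_P L_Pᵈ⁺¹ = 0` and let `f` be a linear functional. The derivation sending `L_v` to
`f v` turns this relation into `(d + 1) ∑ c_P f(P) L_Pᵈ = 0`: the degree drops by one and the points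
of the hyperplane `f = 0` disappear from the support. Induction on `d` yields two facts on the
support `S` of a nontrivial relation in degree `d`.
* `d + 2 ≤ |S|`: remove one point at a time.
* If `|S| ≤ 2d + 1`, then `S` is aligned. Otherwise remove two points to obtain a relation supported
  on some `S₁`, which is aligned by induction, and then remove `S₁` itself to obtain a relation
  supported on some `S₂`, disjoint from `S₁`. By the first fact, one degree lower, both have at
  least `d + 1` points, which is too many for `S`.

Subtracting a decomposition `B` from a minimal one `A` gives a relation whose support `S` satisfies
`A \ B ⊆ S ⊆ A ∪ B`. If it is nontrivial, then `S` is aligned, and since `|B| ≤ |A|` at least half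
of its `d + 2` or more points lie in `A`. Hence `A` contains an aligned subset that is too large.
-/

open MvPolynomial

abbrev ProjPt (n : ℕ) := Projectivization ℂ (Fin (n+1) → ℂ)

/-- The linear form with coefficient vector `v`: `v 0 • x 0 + ⋯ + v n • x n`. -/
noncomputable def linForm (n : ℕ) (v : Fin (n+1) → ℂ) : MvPolynomial (Fin (n+1)) ℂ :=
  ∑ i, C (v i) * X i

/-- `A ⊂ ℙⁿ` is a decomposition of (the class of) `T ∈ Symᵈ(ℂⁿ⁺¹)` if `T` belongs to the
linear span of the `d`-th powers `L_Pᵈ` of coordinate linear forms of the points `P ∈ A`,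
i.e. the class of `T` lies in the projective span `⟨ν_d(A)⟩`. -/
def IsDecomp (n d : ℕ) (T : MvPolynomial (Fin (n+1)) ℂ) (A : Finset (ProjPt n)) : Prop :=
  T ∈ Submodule.span ℂ ((fun P : ProjPt n => (linForm n P.rep) ^ d) '' (A : Set (ProjPt n)))

/-- A decomposition is minimal if no proper subset is a decomposition. -/
def IsMinimalDecomp (n d : ℕ) (T : MvPolynomial (Fin (n+1)) ℂ)
    (A : Finset (ProjPt n)) : Prop :=
  IsDecomp n d T A ∧ ∀ A' ⊂ A, ¬ IsDecomp n d T A'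

open scoped LinearAlgebra.Projectivization
open Module (Dual)
open Finsupp (linearCombination)
open Submodule (span)

theorem support_pointwise_smul_subset {R ι : Type*} [Semiring R] (g : ι → R) (c : ι →₀ R) :
    (g • c).support ⊆ c.support :=
  fun _ hi => Finsupp.mem_support_iff.mpr (right_ne_zero_of_mul (Finsupp.mem_support_iff.mp hi))

section Relations

variable {R M ι : Type*} [Ring R] [AddCommGroup M] [Module R M] {e : ι → M}

theorem one_lt_card_support_of_linearCombination_eq_zero [IsDomain R] [Module.IsTorsionFree R M]
    (he : ∀ i, e i ≠ 0) {c : ι →₀ R} (hc : c ≠ 0) (hrel : linearCombination R e c = 0) :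
    1 < c.support.card := by
  by_contra! hcard
  obtain ⟨i, -⟩ := Finsupp.support_nonempty_iff.mpr hc
  have : Nonempty ι := ⟨i⟩
  obtain ⟨j, a, rfl⟩ := Finsupp.card_support_le_one'.mp hcard
  rw [Finsupp.linearCombination_single, smul_eq_zero, or_iff_left (he j)] at hrel
  exact hc (by rw [hrel, Finsupp.single_zero])

theorem exists_relation_of_minimal_mem_span_image [DecidableEq ι] {x : M} {A B : Finset ι}
    (hA : Minimal (fun s : Finset ι => x ∈ span R (e '' s)) A) (hB : x ∈ span R (e '' B)) :
    ∃ c : ι →₀ R, linearCombination R e c = 0 ∧ A \ B ⊆ c.support ∧ c.support ⊆ A ∪ B := by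
  obtain ⟨a, haA, ha⟩ := (Finsupp.mem_span_image_iff_linearCombination R).mp hA.prop
  obtain ⟨b, hbB, hb⟩ := (Finsupp.mem_span_image_iff_linearCombination R).mp hB
  rw [Finsupp.mem_supported, Finset.coe_subset] at haA hbB
  have hx : x ∈ span R (e '' a.support) :=
    (Finsupp.mem_span_image_iff_linearCombination R).mpr ⟨a, Finsupp.mem_supported_support R a, ha⟩
  have hAa : A ⊆ a.support := hA.le_of_le hx haA
  refine ⟨a - b, by rw [map_sub, ha, hb, sub_self], fun i hi => ?_,
    Finsupp.support_sub.trans (Finset.union_subset_union haA hbB)⟩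
  obtain ⟨hiA, hiB⟩ := Finset.mem_sdiff.mp hi
  have hbi : b i = 0 := Finsupp.notMem_support_iff.mp fun h => hiB (hbB h)
  rw [Finsupp.mem_support_iff, Finsupp.sub_apply, hbi, sub_zero]
  exact Finsupp.mem_support_iff.mp (hAa hiA)

end Relations

theorem cast_factorial_succ_ne_zero {R : Type*} [Semiring R] [NoZeroDivisors R] {d : ℕ} :
    ((d + 1).factorial : R) ≠ 0 ↔ (d + 1 : R) ≠ 0 ∧ (d.factorial : R) ≠ 0 := by
  rw [Nat.factorial_succ, Nat.cast_mul, Nat.cast_succ, mul_ne_zero_iff]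

theorem card_add_card_le_of_disjoint {ι : Type*} {A B S : Finset ι} (hA : A ⊆ S) (hB : B ⊆ S)
    (hdisj : Disjoint A B) : A.card + B.card ≤ S.card := by
  classical
  rw [← Finset.card_union_of_disjoint hdisj]
  exact Finset.card_le_card (Finset.union_subset hA hB)

theorem card_le_two_mul_card_inter {ι : Type*} [DecidableEq ι] {A B S : Finset ι}
    (hAS : A \ B ⊆ S) (hSAB : S ⊆ A ∪ B) (hBA : B.card ≤ A.card) :
    S.card ≤ 2 * (A ∩ S).card := by
  calc S.card = (S \ A).card + (A ∩ S).card := by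
        rw [Finset.inter_comm, Finset.card_sdiff_add_card_inter]
    _ ≤ (B \ A).card + (A ∩ S).card := by
        gcongr 1
        exact Finset.card_le_card (by grind)
    _ ≤ (A \ B).card + (A ∩ S).card := by
        gcongr 1
        exact Finset.card_sdiff_le_card_sdiff_iff.mpr hBA
    _ ≤ (A ∩ S).card + (A ∩ S).card := by
        gcongr 1
        exact Finset.card_le_card (by grind)
    _ = 2 * (A ∩ S).card := (two_mul _).symm

section Aligned

variable {K V : Type*} [DivisionRing K] [AddCommGroup V] [Module K V]

/-- The linear subspace of `V` whose projectivization is the projective span of `S`. -/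
def linearSpan (S : Set (ℙ K V)) : Submodule K V :=
  span K (Projectivization.rep '' S)

theorem rep_mem_linearSpan {S : Set (ℙ K V)} {P : ℙ K V} (hP : P ∈ S) : P.rep ∈ linearSpan S :=
  Submodule.subset_span (Set.mem_image_of_mem _ hP)

theorem rep_mem_linearSpan_singleton {P Q : ℙ K V} : P.rep ∈ linearSpan {Q} ↔ P = Q := by
  refine ⟨fun h => ?_, fun h => h ▸ rep_mem_linearSpan rfl⟩
  rw [linearSpan, Set.image_singleton, Submodule.mem_span_singleton] at h
  rwa [← P.mk_rep, ← Q.mk_rep, Projectivization.mk_eq_mk_iff']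

instance finiteDimensional_linearSpan (S : Finset (ℙ K V)) :
    FiniteDimensional K (linearSpan (S : Set (ℙ K V))) :=
  Module.Finite.span_of_finite K (S.finite_toSet.image _)

/-- A finite set of points is aligned if it lies on a projective line. The condition is an upper
bound on the dimension, so sets of at most one point are aligned even if `ℙ K V` has no lines. -/
def IsAligned (S : Finset (ℙ K V)) : Prop :=
  Module.finrank K (linearSpan (S : Set (ℙ K V))) ≤ 2

theorem IsAligned.subset {S U : Finset (ℙ K V)} (hU : IsAligned U) (hSU : S ⊆ U) : IsAligned S :=
  have hle : linearSpan (S : Set (ℙ K V)) ≤ linearSpan U := Submodule.span_mono (Set.image_mono hSU)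
  (Submodule.finrank_mono hle).trans hU

theorem isAligned_of_card_le_two {S : Finset (ℙ K V)} (hS : S.card ≤ 2) : IsAligned S := by
  classical
  rw [IsAligned, linearSpan, ← Finset.coe_image]
  exact (finrank_span_finset_le_card _).trans (Finset.card_image_le.trans hS)

theorem exists_rep_notMem_linearSpan {S U : Finset (ℙ K V)} (hS : ¬ IsAligned S)
    (hU : IsAligned U) : ∃ P ∈ S, P.rep ∉ linearSpan (U : Set (ℙ K V)) := by
  by_contra! hSU
  have hle : linearSpan (S : Set (ℙ K V)) ≤ linearSpan U :=
    Submodule.span_le.mpr (Set.image_subset_iff.mpr hSU)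
  exact hS ((Submodule.finrank_mono hle).trans hU)

end Aligned

section LinearForm

variable {R σ : Type*} [CommSemiring R] [Fintype σ]

/-- The linear form with coefficient vector `v`, generalizing `linForm` to an arbitrary
coefficient ring and an arbitrary finite set of variables. -/
noncomputable def linearForm (v : σ → R) : MvPolynomial σ R :=
  ∑ i, C (v i) * X i

theorem linearForm_ne_zero {v : σ → R} (hv : v ≠ 0) : linearForm v ≠ 0 := by
  classical
  obtain ⟨i, hi⟩ := Function.ne_iff.mp hv
  intro h
  have heval : eval (Pi.single i 1) (linearForm v) = v i := by
    simp [linearForm, Pi.single_apply]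
  exact hi (by rw [← heval, h, map_zero, Pi.zero_apply])

/-- The derivation `∑ i, f(eᵢ) ∂/∂xᵢ`, which contracts a form with the linear functional `f`. -/
noncomputable def contraction (f : Dual R (σ → R)) :
    Derivation R (MvPolynomial σ R) (MvPolynomial σ R) :=
  mkDerivation R fun i => C (f (Pi.basisFun R σ i))

theorem contraction_linearForm (f : Dual R (σ → R)) (v : σ → R) :
    contraction f (linearForm v) = C (f v) := by
  conv_rhs => rw [← (Pi.basisFun R σ).sum_equivFun v]
  simp only [linearForm, contraction, ← smul_eq_C_mul, map_sum, map_smul, Derivation.map_smul,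
    mkDerivation_X, Pi.basisFun_equivFun, LinearEquiv.refl_apply, smul_eq_mul, map_mul]

theorem contraction_linearForm_pow_succ (f : Dual R (σ → R)) (v : σ → R) (d : ℕ) :
    contraction f (linearForm v ^ (d + 1)) = ((d + 1 : R) * f v) • linearForm v ^ d := by
  rw [Derivation.leibniz_pow, contraction_linearForm, Nat.add_sub_cancel, nsmul_eq_mul,
    smul_eq_mul, smul_eq_C_mul, C_mul, C_add, C_1, map_natCast]
  push_cast
  ring

end LinearForm

section Veronese

variable {K σ : Type*} [Field K] [Fintype σ] {d : ℕ} {c : ℙ K (σ → K) →₀ K}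

/-- The representative `L_Pᵈ` of the image of `P` under the Veronese map `ν_d`. It depends on the
chosen representative of `P`, but only up to a nonzero scalar. -/
noncomputable def veronese (d : ℕ) (P : ℙ K (σ → K)) : MvPolynomial σ K :=
  linearForm P.rep ^ d

theorem veronese_ne_zero (d : ℕ) (P : ℙ K (σ → K)) : veronese d P ≠ 0 :=
  pow_ne_zero d (linearForm_ne_zero P.rep_nonzero)

theorem contraction_linearCombination_veronese_succ (f : Dual K (σ → K)) (d : ℕ)
    (c : ℙ K (σ → K) →₀ K) :
    contraction f (linearCombination K (veronese (d + 1)) c) =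
      (d + 1 : K) • linearCombination K (veronese d) ((fun P : ℙ K (σ → K) => f P.rep) • c) := by
  have hsub := support_pointwise_smul_subset (fun P : ℙ K (σ → K) => f P.rep) c
  rw [Finsupp.linearCombination_apply, Finsupp.sum, map_sum,
    Finsupp.linearCombination_apply_of_mem_supported K (Finset.coe_subset.mpr hsub),
    Finset.smul_sum]
  refine Finset.sum_congr rfl fun P _ => ?_
  rw [Derivation.map_smul, veronese, contraction_linearForm_pow_succ, veronese,
    Finsupp.coe_pointwise_smul, Pi.smul_apply', smul_smul, smul_smul, smul_eq_mul]
  congr 1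
  ring

theorem exists_relation_disjoint_of_rep_notMem_linearSpan (hd : (d + 1 : K) ≠ 0)
    (hrel : linearCombination K (veronese (d + 1)) c = 0) {P : ℙ K (σ → K)} (hP : P ∈ c.support)
    {U : Finset (ℙ K (σ → K))} (hPU : P.rep ∉ linearSpan (U : Set (ℙ K (σ → K)))) :
    ∃ c' : ℙ K (σ → K) →₀ K, c' ≠ 0 ∧ linearCombination K (veronese d) c' = 0 ∧
      c'.support ⊆ c.support ∧ Disjoint c'.support U := by
  obtain ⟨f, hfP, hfU⟩ := Submodule.exists_le_ker_of_notMem hPU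
  refine ⟨(fun Q : ℙ K (σ → K) => f Q.rep) • c, fun h => ?_, ?_,
    support_pointwise_smul_subset _ c, Finset.disjoint_left.mpr fun Q hQ hQU => ?_⟩
  · exact mul_ne_zero hfP (Finsupp.mem_support_iff.mp hP) (DFunLike.congr_fun h P)
  · have hcontr := contraction_linearCombination_veronese_succ f d c
    rw [hrel, map_zero] at hcontr
    exact (smul_eq_zero.mp hcontr.symm).resolve_left hd
  · exact left_ne_zero_of_mul (Finsupp.mem_support_iff.mp hQ) (hfU (rep_mem_linearSpan hQU))

theorem add_two_le_card_support_of_linearCombination_veronese_eq_zero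
    (hd : (d.factorial : K) ≠ 0) (hc : c ≠ 0) (hrel : linearCombination K (veronese d) c = 0) :
    d + 2 ≤ c.support.card := by
  induction d generalizing c with
  | zero => exact one_lt_card_support_of_linearCombination_eq_zero (veronese_ne_zero 0) hc hrel
  | succ d ih =>
    obtain ⟨hd₁, hd⟩ := cast_factorial_succ_ne_zero.mp hd
    obtain ⟨P, hP, Q, hQ, hPQ⟩ := Finset.one_lt_card.mp
      (one_lt_card_support_of_linearCombination_eq_zero (veronese_ne_zero _) hc hrel)
    obtain ⟨c', hc', hrel', hsub, hdisj⟩ :=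
      exists_relation_disjoint_of_rep_notMem_linearSpan (U := {Q}) hd₁ hrel hP
        (by rwa [Finset.coe_singleton, rep_mem_linearSpan_singleton])
    have hssub : c'.support ⊂ c.support :=
      hsub.ssubset_of_mem_notMem hQ (Finset.disjoint_singleton_right.mp hdisj)
    exact (ih hd hc' hrel').trans_lt (Finset.card_lt_card hssub)

theorem isAligned_support_of_linearCombination_veronese_eq_zero
    (hd : (d.factorial : K) ≠ 0) (hcard : c.support.card ≤ 2 * d + 1)
    (hrel : linearCombination K (veronese d) c = 0) : IsAligned c.support := by
  induction d generalizing c with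
  | zero => exact isAligned_of_card_le_two (by lia)
  | succ d ih =>
    obtain ⟨hd₁, hd⟩ := cast_factorial_succ_ne_zero.mp hd
    by_contra hS
    have exists_disjoint {U : Finset (ℙ K (σ → K))} (hU : IsAligned U) :
        ∃ c' : ℙ K (σ → K) →₀ K, linearCombination K (veronese d) c' = 0 ∧
          c'.support ⊆ c.support ∧ Disjoint c'.support U ∧ d + 2 ≤ c'.support.card := by
      obtain ⟨P, hP, hPU⟩ := exists_rep_notMem_linearSpan hS hU
      obtain ⟨c', hc', hrel', hsub, hdisj⟩ :=
        exists_relation_disjoint_of_rep_notMem_linearSpan hd₁ hrel hP hPU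
      exact ⟨c', hrel', hsub, hdisj,
        add_two_le_card_support_of_linearCombination_veronese_eq_zero hd hc' hrel'⟩
    have two_le_card : 2 ≤ c.support.card :=
      le_of_not_ge fun h => hS (isAligned_of_card_le_two h)
    obtain ⟨U, hUS, hU⟩ := Finset.exists_subset_card_eq two_le_card
    obtain ⟨c₁, hrel₁, hsub₁, hdisj₁, hcard₁⟩ := exists_disjoint (isAligned_of_card_le_two hU.le)
    have hle₁ : c₁.support.card ≤ 2 * d + 1 := by
      have := card_add_card_le_of_disjoint hsub₁ hUS hdisj₁
      lia
    obtain ⟨c₂, -, hsub₂, hdisj₂, hcard₂⟩ := exists_disjoint (ih hd hle₁ hrel₁)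
    have := card_add_card_le_of_disjoint hsub₂ hsub₁ hdisj₂
    lia

theorem identifiable_of_no_aligned_subset_general (hd : (d.factorial : K) ≠ 0)
    {T : MvPolynomial σ K} {A B : Finset (ℙ K (σ → K))}
    (hA : Minimal (fun S : Finset (ℙ K (σ → K)) => T ∈ span K (veronese d '' S)) A)
    (hB : T ∈ span K (veronese d '' B)) (hBA : B.card ≤ A.card)
    (hcard : A.card + B.card ≤ 2 * d + 1)
    (halign : ∀ S ⊆ A, IsAligned S → 2 * S.card ≤ d + 1) : B = A := by
  classical
  obtain ⟨c, hrel, hdiff, hsub⟩ := exists_relation_of_minimal_mem_span_image hA hB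
  obtain rfl | hc := eq_or_ne c 0
  · rw [Finsupp.support_zero, Finset.subset_empty, Finset.sdiff_eq_empty_iff_subset] at hdiff
    exact (Finset.eq_of_subset_of_card_le hdiff hBA).symm
  have hlarge := add_two_le_card_support_of_linearCombination_veronese_eq_zero hd hc hrel
  have hsmall : c.support.card ≤ 2 * d + 1 :=
    (Finset.card_le_card hsub).trans ((Finset.card_union_le A B).trans hcard)
  have hline := isAligned_support_of_linearCombination_veronese_eq_zero hd hsmall hrel
  have hinter := halign (A ∩ c.support) Finset.inter_subset_left
    (hline.subset Finset.inter_subset_right)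
  have hhalf := card_le_two_mul_card_inter hdiff hsub hBA
  lia

end Veronese

/-- If `A` is a minimal decomposition of `T ∈ ℙ(Symᵈ(ℂⁿ⁺¹))` with `ℓ(A) ≤ d` containing
no aligned subset of cardinality `d/2` (i.e. every subset of `A` lying on a projective
line has cardinality `< d/2`), then `T` has rank `ℓ(A)` and is identifiable: every
decomposition `B` of `T` with `ℓ(B) ≤ ℓ(A)` equals `A`. -/
theorem identifiable_of_no_aligned_subset (n d : ℕ) (T : MvPolynomial (Fin (n+1)) ℂ)
    (hT : T ≠ 0) (A : Finset (ProjPt n)) (hA : IsMinimalDecomp n d T A)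
    (hcard : A.card ≤ d)
    (halign : ∀ S ⊆ A,
      Module.finrank ℂ
        ↥(Submodule.span ℂ ((fun P : ProjPt n => P.rep) '' (S : Set (ProjPt n)))) ≤ 2 →
      2 * S.card < d) :
    ∀ B : Finset (ProjPt n), IsDecomp n d T B → B.card ≤ A.card → B = A :=
  fun _ hB hBA => identifiable_of_no_aligned_subset_general (by exact_mod_cast d.factorial_ne_zero)
    (minimal_iff_forall_lt.mpr hA) hB hBA (by lia)
    fun S hS hline => (halign S hS hline).le.trans d.le_succ
end

section
/- (Reshaped Kruskal criterion) Let T ∈ ℙ(Symᵈ(ℂⁿ⁺¹)) and let A ⊂ ℙⁿ be a minimal decomposition of T. Fix a partition d = a + b + c with 0 < a ≤ b ≤ c, and let k_a, k_b, k_c be the Kruskal ranks of the sets ν_a(A), ν_b(A), ν_c(A) respectively. If ℓ(A) ≤ (k_a + k_b + k_c − 2)/2, then T has rank ℓ(A) and is identifiable: every decomposition B of T with ℓ(B) ≤ ℓ(A) equals A. -/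
open MvPolynomial

/-- The Kruskal rank of the image `ν_e(A)` of a finite set `A ⊂ ℙⁿ` under the degree-`e`
Veronese map: the maximum `k` (necessarily `≤ ℓ(A)`) such that for every subset `S ⊆ A`
of cardinality `≤ k` the powers `L_Pᵉ`, `P ∈ S`, are linearly independent. -/
noncomputable def veroKruskalRank (n e : ℕ) (A : Finset (ProjPt n)) : ℕ :=
  sSup {k | k ≤ A.card ∧ ∀ S ⊆ A, S.card ≤ k →
    LinearIndependent ℂ (fun P : { x // x ∈ S } => (linForm n (P : ProjPt n).rep) ^ e)}

/-!
Polarization sends `L ^ (a + b + c)` to `L ^ a ⊗ L ^ b ⊗ L ^ c` and multiplication sends it back, so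
uniqueness for powers reduces to Kruskal's theorem for tensors `x i ⊗ y i ⊗ w i`. A second
decomposition with at most `#A` elements yields a nontrivial relation with at least as many terms in
`A` as outside `A`. A relation is a disjoint union of minimal ones, so some minimal relation, on a
set `S` say, has the same property. Put `u i = x i ⊗ y i`. Contracting the factor `w` in the
relation `∑ c i • (u i ⊗ w i) = 0` gives `rank u + rank w ≤ #S`. Minimality makes the family `u`
connected on `S`, and for a connected family of tensors `rank x + rank y ≤ rank u + 1`, as one sees
by building `S` up one circuit at a time. Hence `rank x + rank y + rank w ≤ #S + 1`. At least half
of `S` lies in `A`, so the Kruskal ranks bound the three ranks from below and force `#S ≤ 2`. But no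
two of the tensors are proportional.
-/

open Module
open Submodule (span)
open scoped TensorProduct

lemma mem_span_image_iff_of_leftInverse {R X Y ι : Type*} [Semiring R] [AddCommMonoid X]
    [Module R X] [AddCommMonoid Y] [Module R Y] {x : ι → X} {y : ι → Y} {f : X →ₗ[R] Y}
    {g : Y →ₗ[R] X} (hf : ∀ i, f (x i) = y i) (hg : ∀ i, g (y i) = x i) {T : X}
    (hT : T ∈ span R (Set.range x)) (S : Set ι) :
    f T ∈ span R (y '' S) ↔ T ∈ span R (x '' S) := by
  have hgf : g (f T) = T := LinearMap.eqOn_span (f := g ∘ₗ f) (g := .id)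
    (by rintro _ ⟨i, rfl⟩; simp [hf, hg]) hT
  refine ⟨fun h ↦ ?_, fun h ↦ ?_⟩
  · have h' := Submodule.mem_map_of_mem (f := g) h
    rwa [Submodule.map_span, ← Set.image_comp, hgf, funext hg (f := g ∘ y)] at h'
  · have h' := Submodule.mem_map_of_mem (f := f) h
    rwa [Submodule.map_span, ← Set.image_comp, funext hf (f := f ∘ x)] at h'

section Span

variable {R X ι : Type*} [Ring R] [AddCommGroup X] [Module R X] {x : ι → X}

lemma sum_smul_eq_zero_of_disjoint_span {c : ι → R} {P S : Finset ι} (hPS : P ⊆ S)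
    (hd : Disjoint (span R (x '' P)) (span R (x '' (↑S \ ↑P)))) (h : ∑ i ∈ S, c i • x i = 0) :
    ∑ i ∈ P, c i • x i = 0 := by
  classical
  rw [← Finset.sum_sdiff hPS, add_comm, add_eq_zero_iff_eq_neg] at h
  refine Submodule.disjoint_def.1 hd _ ?_ (h ▸ Submodule.neg_mem _ ?_)
  · exact Submodule.sum_smul_mem _ _ fun i hi ↦ Submodule.subset_span ⟨i, hi, rfl⟩
  · exact Submodule.sum_smul_mem _ _ fun i hi ↦
      Submodule.subset_span ⟨i, by simpa using hi, rfl⟩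

lemma exists_linearCombination_eq_zero_of_minimal [DecidableEq ι] {T : X}
    {A B : Finset ι} (hA : Minimal (fun A : Finset ι ↦ T ∈ span R (x '' A)) A)
    (hB : T ∈ span R (x '' B)) :
    ∃ c : ι →₀ R, c.linearCombination R x = 0 ∧ A \ B ⊆ c.support ∧ c.support ⊆ A ∪ B := by
  obtain ⟨l, hlA, hl⟩ := (Finsupp.mem_span_image_iff_linearCombination R).1 hA.prop
  obtain ⟨m, hmB, hm⟩ := (Finsupp.mem_span_image_iff_linearCombination R).1 hB
  rw [Finsupp.mem_supported, Finset.coe_subset] at hlA hmB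
  have hlA : l.support = A := hA.eq_of_le ((Finsupp.mem_span_image_iff_linearCombination R).2
    ⟨l, Finsupp.mem_supported_support R l, hl⟩) hlA
  refine ⟨l - m, by rw [map_sub, hl, hm, sub_self], fun i hi ↦ ?_, ?_⟩
  · obtain ⟨hiA, hiB⟩ := Finset.mem_sdiff.1 hi
    have hm0 : m i = 0 := Finsupp.notMem_support_iff.1 (mt (@hmB i) hiB)
    rwa [Finsupp.mem_support_iff, Finsupp.sub_apply, hm0, sub_zero, ← Finsupp.mem_support_iff, hlA]
  · exact Finsupp.support_sub.trans (Finset.union_subset_union hlA.le hmB)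

end Span

section Rank

variable {K X ι : Type*} [DivisionRing K] [AddCommGroup X] [Module K X]

instance finiteDimensional_span_image_finset (x : ι → X) (S : Finset ι) :
    FiniteDimensional K (span K (x '' S)) :=
  FiniteDimensional.span_of_finite K (S.finite_toSet.image x)

lemma finrank_image_le_card (x : ι → X) (S : Finset ι) : (x '' S).finrank K ≤ S.card := by
  classical
  rw [← Finset.coe_image]
  exact (finrank_span_finset_le_card _).trans Finset.card_image_le

lemma finrank_image_mono (x : ι → X) {S S' : Finset ι} (h : S ⊆ S') :
    (x '' S).finrank K ≤ (x '' S').finrank K :=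
  Submodule.finrank_mono (Submodule.span_mono (Set.image_mono (Finset.coe_subset.2 h)))

lemma finrank_image_of_linearIndepOn {x : ι → X} {S : Finset ι} (h : LinearIndepOn K x S) :
    (x '' S).finrank K = S.card := by
  rw [Set.image_eq_range]
  exact (finrank_span_eq_card h).trans (Fintype.card_coe S)

lemma span_image_union [DecidableEq ι] (x : ι → X) (P N : Finset ι) :
    span K (x '' (P ∪ N : Finset ι)) = span K (x '' P) ⊔ span K (x '' N) := by
  rw [Finset.coe_union, Set.image_union, Submodule.span_union]

lemma finrank_sup_eq_finrank_add_finrank_map_mkQ (U V : Submodule K X) [FiniteDimensional K U]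
    [FiniteDimensional K V] :
    finrank K ↑(U ⊔ V) = finrank K U + finrank K (V.map U.mkQ) := by
  have h := (U.mkQ.domRestrict (U ⊔ V)).finrank_range_add_finrank_ker
  rw [LinearMap.range_domRestrict, LinearMap.ker_domRestrict, Submodule.ker_mkQ,
    Submodule.map_sup, Submodule.mkQ_map_self, bot_sup_eq] at h
  have hU : finrank K (U.comap (U ⊔ V).subtype) = finrank K U :=
    (Submodule.submoduleOfEquivOfLe le_sup_left).finrank_eq
  rw [← h, hU, add_comm]

lemma finrank_image_union [DecidableEq ι] (x : ι → X) (P N : Finset ι) :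
    (x '' (P ∪ N : Finset ι)).finrank K =
      (x '' P).finrank K + ((span K (x '' P)).mkQ ∘ x '' N).finrank K := by
  simp only [Set.finrank]
  rw [span_image_union, finrank_sup_eq_finrank_add_finrank_map_mkQ, Submodule.map_span,
    Set.image_comp]

end Rank

section MinimalMeeting

variable {K X ι : Type*} [DivisionRing K] [AddCommGroup X] [Module K X] {x : ι → X}
  {U : Submodule K X} {N : Finset ι}

lemma linearIndepOn_of_minimal_not_disjoint
    (hN : Minimal (fun N : Finset ι ↦ ¬ Disjoint U (span K (x '' N))) N) :
    LinearIndepOn K x N := by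
  classical
  refine linearIndepOn_iff_notMem_span.2 fun i hi hmem ↦
    hN.not_prop_of_lt (Finset.erase_ssubset hi) fun hd ↦ hN.prop (hd.mono_right ?_)
  rw [← Finset.coe_erase] at hmem
  rw [Submodule.span_le, ← Finset.insert_erase hi, Finset.coe_insert, Set.image_insert_eq,
    Finset.erase_insert_eq_erase, Finset.erase_idem]
  exact Set.insert_subset hmem Submodule.subset_span

lemma exists_sum_smul_mem_of_minimal_not_disjoint
    (hN : Minimal (fun N : Finset ι ↦ ¬ Disjoint U (span K (x '' N))) N) :
    ∃ c : ι → K, (∀ i ∈ N, c i ≠ 0) ∧ ∑ i ∈ N, c i • x i ∈ U := by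
  classical
  obtain ⟨v, hvU, hvN, hv⟩ : ∃ v ∈ U, v ∈ span K (x '' N) ∧ v ≠ 0 := by
    simpa [Submodule.disjoint_def] using hN.prop
  obtain ⟨c, rfl⟩ := (Submodule.mem_span_image_finset_iff_exists_fun' K).1 hvN
  refine ⟨c, fun i hi hci ↦ hN.not_prop_of_lt (Finset.erase_ssubset hi) fun hd ↦ hv ?_, hvU⟩
  refine Submodule.disjoint_def.1 hd _ hvU
    ((Submodule.mem_span_image_finset_iff_exists_fun' K).2 ⟨c, ?_⟩)
  exact Finset.sum_erase _ (by simp [hci])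

lemma nonempty_of_not_disjoint_span_image (h : ¬ Disjoint U (span K (x '' N))) : N.Nonempty := by
  contrapose! h
  simp [h]

lemma finrank_add_card_le_of_minimal_not_disjoint [FiniteDimensional K U]
    (hN : Minimal (fun N : Finset ι ↦ ¬ Disjoint U (span K (x '' N))) N) :
    finrank K U + N.card ≤ finrank K ↑(U ⊔ span K (x '' N)) + 1 := by
  classical
  obtain ⟨i, hi⟩ := nonempty_of_not_disjoint_span_image hN.prop
  have hd : Disjoint U (span K (x '' (N.erase i))) :=
    not_not.1 (hN.not_prop_of_lt (Finset.erase_ssubset hi))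
  have hind : LinearIndepOn K x (N.erase i) :=
    (linearIndepOn_of_minimal_not_disjoint hN).mono (Finset.coe_subset.2 (Finset.erase_subset i N))
  calc finrank K U + N.card
      = finrank K U + finrank K (span K (x '' (N.erase i))) + 1 := by
        rw [← Finset.card_erase_add_one hi, ← add_assoc, ← finrank_image_of_linearIndepOn hind,
          Set.finrank]
    _ = finrank K ↑(U ⊔ span K (x '' (N.erase i))) + 1 := by
        rw [← Submodule.finrank_sup_add_finrank_inf_eq, hd.eq_bot, finrank_bot, add_zero]
    _ ≤ _ := by
        gcongr
        exact Submodule.finrank_mono (sup_le_sup_left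
          (Submodule.span_mono (Set.image_mono (Finset.coe_subset.2 (Finset.erase_subset i N)))) U)

end MinimalMeeting

/-- The family `x` is connected on `S` if the span of `x '' S` is not the direct sum of the spans
over two nonempty sets partitioning `S`: the linear matroid of `x` on `S` is connected. -/
def SpanConnected (R : Type*) {X ι : Type*} [Semiring R] [AddCommMonoid X] [Module R X] (x : ι → X)
    (S : Finset ι) : Prop :=
  ∀ P ⊂ S, P.Nonempty → ¬ Disjoint (span R (x '' P)) (span R (x '' (↑S \ ↑P)))

lemma spanConnected_of_minimal_sum_smul_eq_zero {R X ι : Type*} [Ring R] [AddCommGroup X]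
    [Module R X] {x : ι → X} {c : ι → R} {S : Finset ι}
    (hS : Minimal (fun S : Finset ι ↦ S.Nonempty ∧ ∑ i ∈ S, c i • x i = 0) S) :
    SpanConnected R x S := fun _ hPS hP hd ↦
  hS.not_prop_of_lt hPS ⟨hP, sum_smul_eq_zero_of_disjoint_span hPS.1 hd hS.prop.2⟩

section Splitting

variable {K X Y W ι : Type*} [Field K] [AddCommGroup X] [Module K X] [AddCommGroup Y] [Module K Y]
  [AddCommGroup W] [Module K W] {x : ι → X} {y : ι → Y} {w : ι → W} {c : ι → K}

lemma disjoint_span_tmul {N P : Set ι} (h : Disjoint (span K (x '' N)) (span K (x '' P))) :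
    Disjoint (span K ((fun i ↦ x i ⊗ₜ[K] y i) '' N)) (span K ((fun i ↦ x i ⊗ₜ[K] y i) '' P)) := by
  obtain ⟨V, hPV, hV⟩ := h.symm.exists_isCompl
  let π := ((span K (x '' N)).projection V hV.symm).rTensor Y
  have hπN : Set.EqOn π (LinearMap.id (R := K) (M := X ⊗[K] Y)) ((fun i ↦ x i ⊗ₜ[K] y i) '' N) := by
    rintro _ ⟨i, hi, rfl⟩
    simp [π, Submodule.projection_apply_of_mem_left hV.symm (Submodule.subset_span ⟨i, hi, rfl⟩)]
  have hπP : Set.EqOn π (0 : X ⊗[K] Y →ₗ[K] X ⊗[K] Y) ((fun i ↦ x i ⊗ₜ[K] y i) '' P) := by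
    rintro _ ⟨i, hi, rfl⟩
    simp [π, Submodule.projection_apply_of_mem_right hV.symm
      (hPV (Submodule.subset_span ⟨i, hi, rfl⟩))]
  refine Submodule.disjoint_def.2 fun t hN hP ↦ ?_
  exact (LinearMap.eqOn_span hπN hN).symm.trans (LinearMap.eqOn_span hπP hP)

lemma mem_span_image_sdiff_of_sum_tmul_eq_zero {N I : Finset ι} (hIN : I ⊆ N)
    (hI : LinearIndepOn K y I) (h : ∑ j ∈ N, c j • (x j ⊗ₜ[K] y j) = 0) {i : ι} (hi : i ∈ I)
    (hci : c i ≠ 0) : x i ∈ span K (x '' (↑N \ ↑I)) := by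
  classical
  obtain ⟨φ, hφi, hφ⟩ :=
    Submodule.exists_le_ker_of_notMem (linearIndepOn_iff_notMem_span.1 hI i hi)
  have hφI : ∀ j ∈ I, j ≠ i → φ (y j) = 0 := fun j hj hji ↦
    hφ (Submodule.subset_span ⟨j, ⟨hj, hji⟩, rfl⟩)
  have hcontract : ∑ j ∈ N, c j • φ (y j) • x j = 0 := by
    simpa using congrArg ((TensorProduct.rid K X).toLinearMap ∘ₗ φ.lTensor X) h
  rw [← Finset.sum_sdiff hIN, Finset.sum_eq_single_of_mem i hi
    fun j hj hji ↦ by rw [hφI j hj hji, zero_smul, smul_zero]] at hcontract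
  rw [← Submodule.smul_mem_iff _ hφi, ← Submodule.smul_mem_iff _ hci,
    ← neg_eq_of_add_eq_zero_right hcontract]
  exact Submodule.neg_mem _ <| Submodule.sum_mem _ fun j hj ↦ Submodule.smul_mem _ _ <|
    Submodule.smul_mem _ _ <| Submodule.subset_span ⟨j, by simpa using hj, rfl⟩

lemma finrank_add_finrank_le_card_of_sum_tmul_eq_zero {N : Finset ι} (hc : ∀ i ∈ N, c i ≠ 0)
    (h : ∑ i ∈ N, c i • (x i ⊗ₜ[K] y i) = 0) :
    (x '' N).finrank K + (y '' N).finrank K ≤ N.card := by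
  classical
  obtain ⟨I', hIN', -, hspan, hI⟩ := exists_linearIndepOn_extension
    (linearIndepOn_empty K y) (Set.empty_subset (N : Set ι))
  lift I' to Finset ι using N.finite_toSet.subset hIN' with I
  have hIN : I ⊆ N := Finset.coe_subset.1 hIN'
  have hy : (y '' N).finrank K ≤ I.card :=
    (Submodule.finrank_mono (Submodule.span_le.2 hspan)).trans (finrank_image_le_card y I)
  have hx : span K (x '' N) ≤ span K (x '' (N \ I : Finset ι)) := by
    rw [Submodule.span_le, Finset.coe_sdiff]
    rintro _ ⟨i, hi, rfl⟩
    by_cases hiI : i ∈ I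
    · exact mem_span_image_sdiff_of_sum_tmul_eq_zero hIN hI h hiI (hc i hi)
    · exact Submodule.subset_span ⟨i, ⟨hi, hiI⟩, rfl⟩
  calc (x '' N).finrank K + (y '' N).finrank K
      ≤ (N \ I).card + I.card :=
        add_le_add ((Submodule.finrank_mono hx).trans (finrank_image_le_card x _)) hy
    _ = N.card := Finset.card_sdiff_add_card_eq_card hIN

/- Adjoining `N` raises the rank of the tensors by at least `#N - 1`. It raises the rank of `x` and
`y` together by at most as much: modulo the span of `y` over `P` a relation on `N` remains, and the
spans of `x` over `P` and `N` meet. -/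
lemma finrank_add_finrank_le_finrank_tmul_union [DecidableEq ι] {P N : Finset ι}
    (hP : (x '' P).finrank K + (y '' P).finrank K ≤
      ((fun i ↦ x i ⊗ₜ[K] y i) '' P).finrank K + 1)
    (hN : Minimal (fun N : Finset ι ↦ ¬ Disjoint (span K ((fun i ↦ x i ⊗ₜ[K] y i) '' P))
      (span K ((fun i ↦ x i ⊗ₜ[K] y i) '' N))) N) :
    (x '' (P ∪ N : Finset ι)).finrank K + (y '' (P ∪ N : Finset ι)).finrank K ≤
      ((fun i ↦ x i ⊗ₜ[K] y i) '' (P ∪ N : Finset ι)).finrank K + 1 := by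
  have htensor := finrank_add_card_le_of_minimal_not_disjoint hN
  rw [← span_image_union] at htensor
  have hx : (x '' (P ∪ N : Finset ι)).finrank K + 1 ≤
      (x '' P).finrank K + (x '' N).finrank K := by
    have hmeet : span K (x '' P) ⊓ span K (x '' N) ≠ ⊥ :=
      fun h ↦ hN.prop (disjoint_span_tmul (disjoint_iff.2 h))
    simp only [Set.finrank]
    rw [span_image_union, ← Submodule.finrank_sup_add_finrank_inf_eq]
    gcongr
    exact Submodule.one_le_finrank_iff.2 hmeet
  obtain ⟨c, hc, hcP⟩ := exists_sum_smul_mem_of_minimal_not_disjoint hN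
  have hrel : ∑ i ∈ N, c i • (x i ⊗ₜ[K] ((span K (y '' P)).mkQ ∘ y) i) = 0 := by
    have hker : span K ((fun i ↦ x i ⊗ₜ[K] y i) '' P) ≤
        LinearMap.ker ((span K (y '' P)).mkQ.lTensor X) := by
      rw [Submodule.span_le]
      rintro _ ⟨i, hi, rfl⟩
      have hi0 : (span K (y '' P)).mkQ (y i) = 0 :=
        (Submodule.Quotient.mk_eq_zero _).2 (Submodule.subset_span ⟨i, hi, rfl⟩)
      rw [SetLike.mem_coe, LinearMap.mem_ker, LinearMap.lTensor_tmul, hi0, TensorProduct.tmul_zero]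
    simpa only [LinearMap.mem_ker, map_sum, map_smul, LinearMap.lTensor_tmul,
      Function.comp_apply] using hker hcP
  have hquot := finrank_add_finrank_le_card_of_sum_tmul_eq_zero hc hrel
  have hy := finrank_image_union (K := K) y P N
  simp only [Set.finrank] at *
  omega

/- A maximal subset of `S` satisfying the bound is `S` itself: otherwise connectedness provides
elements to adjoin. -/
lemma SpanConnected.finrank_add_finrank_le {S : Finset ι}
    (hS : SpanConnected K (fun i ↦ x i ⊗ₜ[K] y i) S) (h0 : ∃ i ∈ S, x i ⊗ₜ[K] y i ≠ 0) :
    (x '' S).finrank K + (y '' S).finrank K ≤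
      ((fun i ↦ x i ⊗ₜ[K] y i) '' S).finrank K + 1 := by
  classical
  obtain ⟨i, hi, hi0⟩ := h0
  let bounded : Set (Finset ι) := {P | P ⊆ S ∧ (x '' P).finrank K + (y '' P).finrank K ≤
    ((fun i ↦ x i ⊗ₜ[K] y i) '' P).finrank K + 1}
  have hsingle : {i} ∈ bounded := by
    have hx := finrank_image_le_card (K := K) x {i}
    have hy := finrank_image_le_card (K := K) y {i}
    have hxy : ((fun i ↦ x i ⊗ₜ[K] y i) '' ({i} : Finset ι)).finrank K = 1 :=
      finrank_image_of_linearIndepOn (by simpa using hi0)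
    rw [Finset.card_singleton] at hx hy
    exact ⟨Finset.singleton_subset_iff.2 hi, by omega⟩
  obtain ⟨P, hiP, hP⟩ := Set.Finite.exists_le_maximal
    (S.powerset.finite_toSet.subset fun P hP ↦ Finset.mem_coe.2 (Finset.mem_powerset.2 hP.1))
    hsingle
  obtain rfl | hPS := hP.prop.1.eq_or_ssubset
  · exact hP.prop.2
  obtain ⟨N, hNS, hN⟩ := exists_minimal_le_of_wellFoundedLT (fun N : Finset ι ↦ ¬ Disjoint
    (span K ((fun i ↦ x i ⊗ₜ[K] y i) '' P)) (span K ((fun i ↦ x i ⊗ₜ[K] y i) '' N))) (S \ P)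
    (by simpa using hS P hPS ⟨i, Finset.singleton_subset_iff.1 hiP⟩)
  have hPN : P ∪ N ∈ bounded :=
    ⟨Finset.union_subset hP.prop.1 (hNS.trans Finset.sdiff_subset),
      finrank_add_finrank_le_finrank_tmul_union hP.prop.2 hN⟩
  obtain ⟨j, hj⟩ := nonempty_of_not_disjoint_span_image hN.prop
  exact absurd (hP.le_of_ge hPN Finset.subset_union_left (Finset.mem_union_right P hj))
    (Finset.mem_sdiff.1 (hNS hj)).2

lemma finrank_add_finrank_add_finrank_le_of_minimal_sum_tmul_eq_zero {S : Finset ι}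
    (hS : Minimal (fun S : Finset ι ↦
      S.Nonempty ∧ ∑ i ∈ S, c i • ((x i ⊗ₜ[K] y i) ⊗ₜ[K] w i) = 0) S)
    (hc : ∀ i ∈ S, c i ≠ 0) (h0 : ∃ i ∈ S, x i ⊗ₜ[K] y i ≠ 0) :
    (x '' S).finrank K + (y '' S).finrank K + (w '' S).finrank K ≤ S.card + 1 := by
  have hconn : SpanConnected K (fun i ↦ x i ⊗ₜ[K] y i) S := fun P hPS hP hd ↦
    spanConnected_of_minimal_sum_smul_eq_zero hS P hPS hP (disjoint_span_tmul hd)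
  have hxy := hconn.finrank_add_finrank_le h0
  have hw := finrank_add_finrank_le_card_of_sum_tmul_eq_zero hc hS.prop.2
  omega

end Splitting

section KruskalRank

variable {R X ι : Type*} [Semiring R] [AddCommMonoid X] [Module R X] {x : ι → X} {A : Finset ι}

/-- The Kruskal rank of the family `x` on the finite set `A`: the largest `k ≤ #A` such that `x` is
linearly independent on every subset of `A` with at most `k` elements. -/
noncomputable def kruskalRank (R : Type*) {X ι : Type*} [Semiring R] [AddCommMonoid X] [Module R X]
    (x : ι → X) (A : Finset ι) : ℕ :=
  sSup {k | k ≤ A.card ∧ ∀ S ⊆ A, S.card ≤ k → LinearIndependent R (fun i : {i // i ∈ S} ↦ x i)}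

lemma kruskalRank_mem (x : ι → X) (A : Finset ι) :
    kruskalRank R x A ∈ {k | k ≤ A.card ∧
      ∀ S ⊆ A, S.card ≤ k → LinearIndependent R (fun i : {i // i ∈ S} ↦ x i)} := by
  refine Nat.sSup_mem ⟨0, Nat.zero_le _, fun S _ hS ↦ ?_⟩ ⟨A.card, fun k hk ↦ hk.1⟩
  obtain rfl : S = ∅ := Finset.card_eq_zero.1 (Nat.le_zero.1 hS)
  exact linearIndependent_empty_type

lemma kruskalRank_le_card (x : ι → X) (A : Finset ι) : kruskalRank R x A ≤ A.card :=
  (kruskalRank_mem x A).1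

lemma linearIndepOn_of_card_le_kruskalRank {S : Finset ι} (hSA : S ⊆ A)
    (hS : S.card ≤ kruskalRank R x A) : LinearIndepOn R x S :=
  (kruskalRank_mem x A).2 S hSA hS

end KruskalRank

lemma min_kruskalRank_card_le_finrank_image {K X ι : Type*} [DivisionRing K]
    [AddCommGroup X] [Module K X] {x : ι → X} {A P S : Finset ι} (hPA : P ⊆ A) (hPS : P ⊆ S) :
    min (kruskalRank K x A) P.card ≤ (x '' S).finrank K := by
  obtain ⟨Q, hQP, hQ⟩ := Finset.exists_subset_card_eq (min_le_right (kruskalRank K x A) P.card)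
  rw [← hQ, ← finrank_image_of_linearIndepOn (linearIndepOn_of_card_le_kruskalRank
    (hQP.trans hPA) (hQ.trans_le (min_le_left _ _)))]
  exact finrank_image_mono x (hQP.trans hPS)

lemma exists_minimal_sum_eq_zero_of_sum_nonneg {M G ι : Type*} [AddCommMonoid M]
    [AddCommMonoid G] [LinearOrder G] [IsOrderedAddMonoid G] {f : ι → M} {v : ι → G}
    {Z : Finset ι} (hZ : Z.Nonempty) (hf : ∑ i ∈ Z, f i = 0) (hv : 0 ≤ ∑ i ∈ Z, v i) :
    ∃ S ⊆ Z, Minimal (fun S : Finset ι ↦ S.Nonempty ∧ ∑ i ∈ S, f i = 0) S ∧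
      0 ≤ ∑ i ∈ S, v i := by
  classical
  induction Z using Finset.strongInduction with
  | H Z ih =>
  by_cases hmin : Minimal (fun S : Finset ι ↦ S.Nonempty ∧ ∑ i ∈ S, f i = 0) Z
  · exact ⟨Z, subset_rfl, hmin, hv⟩
  obtain ⟨P, hPZ, hP, hfP⟩ := (not_minimal_iff_exists_lt ⟨hZ, hf⟩).1 hmin
  obtain hvP | hvP := le_or_gt 0 (∑ i ∈ P, v i)
  · obtain ⟨S, hSP, hS⟩ := ih P hPZ hP hfP hvP
    exact ⟨S, hSP.trans hPZ.1, hS⟩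
  · have hv' := Finset.sum_sdiff (f := v) hPZ.1
    have hf' := Finset.sum_sdiff (f := f) hPZ.1
    obtain ⟨S, hSP, hS⟩ := ih (Z \ P) (Finset.sdiff_ssubset hPZ.1 hP)
      (Finset.sdiff_nonempty.2 hPZ.2) (by rwa [hfP, add_zero, hf] at hf') (by
        by_contra! h
        exact (add_neg_of_neg_of_nonpos h hvP.le).not_ge (hv'.symm ▸ hv))
    exact ⟨S, hSP.trans Finset.sdiff_subset, hS⟩

lemma sum_ite_mem_one_neg_one {ι : Type*} [DecidableEq ι] (Z A : Finset ι) :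
    ∑ i ∈ Z, (if i ∈ A then 1 else -1 : ℤ) = (Z ∩ A).card - (Z \ A).card := by
  rw [Finset.sum_ite, Finset.filter_mem_eq_inter, Finset.filter_notMem_eq_sdiff]
  simp [sub_eq_add_neg]

section Kruskal

variable {K X Y W ι : Type*} [Field K] [AddCommGroup X] [Module K X] [AddCommGroup Y] [Module K Y]
  [AddCommGroup W] [Module K W] {x : ι → X} {y : ι → Y} {w : ι → W} {c : ι → K} {A : Finset ι}

lemma card_le_two_of_minimal_sum_tmul_eq_zero [DecidableEq ι] {S : Finset ι}
    (hcard : 2 * A.card + 2 ≤ kruskalRank K x A + kruskalRank K y A + kruskalRank K w A)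
    (hS : Minimal (fun S : Finset ι ↦
      S.Nonempty ∧ ∑ i ∈ S, c i • ((x i ⊗ₜ[K] y i) ⊗ₜ[K] w i) = 0) S)
    (hc : ∀ i ∈ S, c i ≠ 0) (h0 : ∃ i ∈ S, x i ⊗ₜ[K] y i ≠ 0)
    (hSA : (S \ A).card ≤ (S ∩ A).card) : S.card ≤ 2 := by
  have hle := finrank_add_finrank_add_finrank_le_of_minimal_sum_tmul_eq_zero hS hc h0
  have hx := min_kruskalRank_card_le_finrank_image (K := K) (x := x)
    (Finset.inter_subset_right (s₁ := S) (s₂ := A)) Finset.inter_subset_left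
  have hy := min_kruskalRank_card_le_finrank_image (K := K) (x := y)
    (Finset.inter_subset_right (s₁ := S) (s₂ := A)) Finset.inter_subset_left
  have hw := min_kruskalRank_card_le_finrank_image (K := K) (x := w)
    (Finset.inter_subset_right (s₁ := S) (s₂ := A)) Finset.inter_subset_left
  have hxA := kruskalRank_le_card (R := K) x A
  have hyA := kruskalRank_le_card (R := K) y A
  have hwA := kruskalRank_le_card (R := K) w A
  have hA := Finset.card_le_card (Finset.inter_subset_right (s₁ := S) (s₂ := A))
  have hsplit := Finset.card_sdiff_add_card_inter S A
  -- Any two of the Kruskal ranks sum to at least `#A + 2`, hence the three minima sum to more than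
  -- `2 * #(S ∩ A) + 1 ≥ #S + 1` as soon as `#(S ∩ A) ≥ 2`.
  omega

lemma sum_smul_tmul_ne_zero_of_card_sdiff_le [DecidableEq ι] {Z : Finset ι}
    (hpair : ∀ i j, LinearIndepOn K (fun i ↦ (x i ⊗ₜ[K] y i) ⊗ₜ[K] w i) {i, j})
    (hcard : 2 * A.card + 2 ≤ kruskalRank K x A + kruskalRank K y A + kruskalRank K w A)
    (hZ : Z.Nonempty) (hc : ∀ i ∈ Z, c i ≠ 0) (hZA : (Z \ A).card ≤ (Z ∩ A).card) :
    ∑ i ∈ Z, c i • ((x i ⊗ₜ[K] y i) ⊗ₜ[K] w i) ≠ 0 := by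
  intro hsum
  obtain ⟨S, hSZ, hS, hv⟩ := exists_minimal_sum_eq_zero_of_sum_nonneg hZ hsum
    (v := fun i ↦ if i ∈ A then 1 else -1) (by rw [sum_ite_mem_one_neg_one]; omega)
  rw [sum_ite_mem_one_neg_one] at hv
  obtain ⟨i, hi⟩ := hS.prop.1
  have hi0 : x i ⊗ₜ[K] y i ≠ 0 := fun h ↦
    (hpair i i).ne_zero (Set.mem_insert i _) (by simp only [h, TensorProduct.zero_tmul])
  have htwo : S.card ≤ 2 := card_le_two_of_minimal_sum_tmul_eq_zero hcard hS
    (fun i hi ↦ hc i (hSZ hi)) ⟨i, hi, hi0⟩ (by omega)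
  have : Nonempty ι := ⟨i⟩
  obtain ⟨j, hj⟩ := Finset.card_le_one_iff_subset_singleton.1
    (show (S.erase i).card ≤ 1 by rw [Finset.card_erase_of_mem hi]; omega)
  have hSij : (S : Set ι) ⊆ {i, j} := by
    simpa using Finset.coe_subset.2 (Finset.subset_insert_iff.2 hj)
  exact hc i (hSZ hi) (linearIndepOn_finset_iff.1 ((hpair i j).mono hSij) c hS.prop.2 i hi)

theorem eq_of_mem_span_tmul_of_card_le {T : (X ⊗[K] Y) ⊗[K] W} {B : Finset ι}
    (hpair : ∀ i j, LinearIndepOn K (fun i ↦ (x i ⊗ₜ[K] y i) ⊗ₜ[K] w i) {i, j})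
    (hcard : 2 * A.card + 2 ≤ kruskalRank K x A + kruskalRank K y A + kruskalRank K w A)
    (hA : Minimal (fun A : Finset ι ↦
      T ∈ span K ((fun i ↦ (x i ⊗ₜ[K] y i) ⊗ₜ[K] w i) '' A)) A)
    (hB : T ∈ span K ((fun i ↦ (x i ⊗ₜ[K] y i) ⊗ₜ[K] w i) '' B)) (hBA : B.card ≤ A.card) :
    B = A := by
  classical
  obtain ⟨c, hc, hAc, hcAB⟩ := exists_linearCombination_eq_zero_of_minimal hA hB
  by_contra hne
  have hAB : (A \ B).Nonempty := Finset.sdiff_nonempty.2 fun h ↦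
    hne (Finset.eq_of_subset_of_card_le h hBA).symm
  rw [Finsupp.linearCombination_apply, Finsupp.sum] at hc
  refine sum_smul_tmul_ne_zero_of_card_sdiff_le hpair hcard (hAB.mono hAc)
    (fun i hi ↦ Finsupp.mem_support_iff.1 hi) ?_ hc
  calc (c.support \ A).card
      ≤ (B \ A).card := Finset.card_le_card fun i hi ↦ by grind
    _ ≤ (A \ B).card := Finset.card_sdiff_le_card_sdiff_iff.2 hBA
    _ ≤ (c.support ∩ A).card :=
        Finset.card_le_card (Finset.subset_inter hAc Finset.sdiff_subset)

end Kruskal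

section Polarization

variable {R σ : Type*} [CommSemiring R] {L : MvPolynomial σ R}

/-- The component of bidegree `(p, q)` of the comultiplication `F(X) ↦ F(X ⊗ 1 + 1 ⊗ X)`. On forms
of degree `p + q` it is the partial polarization, up to a binomial coefficient. -/
noncomputable def polarization (R σ : Type*) [CommSemiring R] (p q : ℕ) :
    MvPolynomial σ R →ₗ[R] MvPolynomial σ R ⊗[R] MvPolynomial σ R :=
  TensorProduct.map (homogeneousComponent p) (homogeneousComponent q) ∘ₗ
    (aeval fun i ↦ X i ⊗ₜ[R] 1 + 1 ⊗ₜ[R] X i).toLinearMap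

lemma aeval_tmul_one_add_one_tmul (hL : L.IsHomogeneous 1) :
    aeval (fun i ↦ X i ⊗ₜ[R] 1 + 1 ⊗ₜ[R] X i : σ → MvPolynomial σ R ⊗[R] MvPolynomial σ R) L =
      L ⊗ₜ[R] 1 + 1 ⊗ₜ[R] L := by
  rw [← mem_homogeneousSubmodule, homogeneousSubmodule_one_eq_span_X] at hL
  refine LinearMap.eqOn_span (f := AlgHom.toLinearMap (aeval _)) (g :=
    (TensorProduct.mk R (MvPolynomial σ R) (MvPolynomial σ R)).flip 1 +
      TensorProduct.mk R (MvPolynomial σ R) (MvPolynomial σ R) 1) ?_ hL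
  rintro _ ⟨i, rfl⟩
  simp

lemma polarization_pow (hL : L.IsHomogeneous 1) (p q : ℕ) :
    polarization R σ p q (L ^ (p + q)) = ((p + q).choose p : R) • ((L ^ p) ⊗ₜ[R] (L ^ q)) := by
  have hcomp (i j : ℕ) : homogeneousComponent i (L ^ j) = if i = j then L ^ j else 0 :=
    homogeneousComponent_of_mem (by simpa using hL.pow j)
  have hterm (m : ℕ) : (L ⊗ₜ[R] (1 : MvPolynomial σ R)) ^ m *
      ((1 : MvPolynomial σ R) ⊗ₜ[R] L) ^ (p + q - m) * ((p + q).choose m : ℕ) =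
        ((p + q).choose m : R) • ((L ^ m) ⊗ₜ[R] (L ^ (p + q - m))) := by
    rw [Algebra.TensorProduct.tmul_pow, Algebra.TensorProduct.tmul_pow,
      Algebra.TensorProduct.tmul_mul_tmul, one_pow, one_pow, one_mul, mul_one, ← nsmul_eq_mul',
      Nat.cast_smul_eq_nsmul]
  rw [polarization, LinearMap.comp_apply, AlgHom.toLinearMap_apply, map_pow,
    aeval_tmul_one_add_one_tmul hL, add_pow, map_sum, Finset.sum_eq_single_of_mem p (by simp)]
  · rw [hterm, map_smul, TensorProduct.map_tmul, hcomp, hcomp, if_pos rfl,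
      if_pos (Nat.add_sub_cancel_left p q).symm, Nat.add_sub_cancel_left]
  · intro m _ hmp
    rw [hterm, map_smul, TensorProduct.map_tmul, hcomp, if_neg hmp.symm, TensorProduct.zero_tmul,
      smul_zero]

lemma exists_linearMap_pow_eq_tmul {K : Type*} [Field K] {a b c : ℕ}
    (hK : ((a + b + c).factorial : K) ≠ 0) :
    ∃ f : MvPolynomial σ K →ₗ[K] (MvPolynomial σ K ⊗[K] MvPolynomial σ K) ⊗[K] MvPolynomial σ K,
      ∀ L : MvPolynomial σ K, L.IsHomogeneous 1 →
        f (L ^ (a + b + c)) = ((L ^ a) ⊗ₜ[K] (L ^ b)) ⊗ₜ[K] (L ^ c) := by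
  have hchoose : ((a + b + c).choose (a + b) * (a + b).choose a : K) ≠ 0 := by
    have h : (a + b + c).factorial = (a + b + c).choose (a + b) * (a + b).choose a *
        (a.factorial * b.factorial * c.factorial) := by
      rw [← Nat.add_choose_mul_factorial_mul_factorial (a + b) c,
        ← Nat.add_choose_mul_factorial_mul_factorial a b, Nat.choose_symm_add, Nat.choose_symm_add]
      ring
    rw [h, Nat.cast_mul, Nat.cast_mul] at hK
    exact left_ne_zero_of_mul hK
  refine ⟨((a + b + c).choose (a + b) * (a + b).choose a : K)⁻¹ •
    (polarization K σ a b).rTensor _ ∘ₗ polarization K σ (a + b) c, fun L hL ↦ ?_⟩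
  rw [LinearMap.smul_apply, LinearMap.comp_apply, polarization_pow hL, map_smul,
    LinearMap.rTensor_tmul, polarization_pow hL, ← TensorProduct.smul_tmul', smul_smul, smul_smul,
    mul_assoc, inv_mul_cancel₀ hchoose, one_smul]

end Polarization

section Powers

variable {K σ ι : Type*} [Field K] {L : ι → MvPolynomial σ K}

lemma linearIndepOn_pow_pair {m d : ℕ} (hd : d ≠ 0) (hL : ∀ i, (L i).IsHomogeneous m) {i j : ι}
    (h : LinearIndepOn K L {i, j}) : LinearIndepOn K (fun i ↦ L i ^ d) {i, j} := by
  obtain rfl | hij := eq_or_ne i j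
  · simpa [hd] using h
  have hi0 : L i ≠ 0 := h.ne_zero (Set.mem_insert i _)
  have hj0 : L j ≠ 0 := h.ne_zero (Set.mem_insert_of_mem i rfl)
  rw [linearIndepOn_pair_iff _ hij (pow_ne_zero d hi0)]
  rw [linearIndepOn_pair_iff _ hij hi0] at h
  rintro s hs
  obtain ⟨g, hg⟩ : L i ∣ L j := (IsIntegrallyClosed.pow_dvd_pow_iff hd).1
    ⟨C s, by rw [← hs, smul_eq_C_mul, mul_comm]⟩
  have hg0 : g ≠ 0 := right_ne_zero_of_mul (hg ▸ hj0)
  have hdeg : g.totalDegree = 0 := by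
    have := totalDegree_mul_of_isDomain hi0 hg0
    rw [← hg, (hL i).totalDegree hi0, (hL j).totalDegree hj0] at this
    omega
  refine h (g.coeff 0) ?_
  rw [smul_eq_C_mul, ← totalDegree_eq_zero_iff_eq_C.1 hdeg, mul_comm, hg]

lemma linearIndepOn_tmul_pow_pair {a b c m : ℕ} (habc : a + b + c ≠ 0)
    (hL : ∀ i, (L i).IsHomogeneous m) {i j : ι} (h : LinearIndepOn K L {i, j}) :
    LinearIndepOn K (fun i ↦ ((L i ^ a) ⊗ₜ[K] (L i ^ b)) ⊗ₜ[K] (L i ^ c)) {i, j} :=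
  .of_comp (LinearMap.mul' K _ ∘ₗ (LinearMap.mul' K (MvPolynomial σ K)).rTensor _) <| by
    simpa [Function.comp_def, ← pow_add] using linearIndepOn_pow_pair habc hL h

end Powers

theorem reshaped_kruskal_criterion_general {K σ ι : Type*} [Field K] {a b c : ℕ}
    (hK : ((a + b + c).factorial : K) ≠ 0) (habc : a + b + c ≠ 0) {L : ι → MvPolynomial σ K}
    (hL : ∀ i, (L i).IsHomogeneous 1) (hpair : ∀ i j, LinearIndepOn K L {i, j})
    {T : MvPolynomial σ K} {A B : Finset ι}
    (hA : Minimal (fun A : Finset ι ↦ T ∈ span K ((fun i ↦ L i ^ (a + b + c)) '' A)) A)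
    (hcard : 2 * A.card + 2 ≤ kruskalRank K (fun i ↦ L i ^ a) A +
      kruskalRank K (fun i ↦ L i ^ b) A + kruskalRank K (fun i ↦ L i ^ c) A)
    (hB : T ∈ span K ((fun i ↦ L i ^ (a + b + c)) '' B)) (hBA : B.card ≤ A.card) : B = A := by
  obtain ⟨f, hf⟩ := exists_linearMap_pow_eq_tmul (σ := σ) hK
  let g := LinearMap.mul' K (MvPolynomial σ K) ∘ₗ
    (LinearMap.mul' K (MvPolynomial σ K)).rTensor (MvPolynomial σ K)
  have hg (i : ι) : g (((L i ^ a) ⊗ₜ[K] (L i ^ b)) ⊗ₜ[K] (L i ^ c)) = L i ^ (a + b + c) := by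
    simp [g, ← pow_add]
  have hT : T ∈ span K (Set.range fun i ↦ L i ^ (a + b + c)) :=
    Submodule.span_mono (Set.image_subset_range _ _) hA.prop
  have hfT (S : Finset ι) : T ∈ span K ((fun i ↦ L i ^ (a + b + c)) '' S) ↔
      f T ∈ span K ((fun i ↦ ((L i ^ a) ⊗ₜ[K] (L i ^ b)) ⊗ₜ[K] (L i ^ c)) '' S) :=
    (mem_span_image_iff_of_leftInverse (fun i ↦ hf (L i) (hL i)) hg hT S).symm
  simp only [hfT] at hA hB
  exact eq_of_mem_span_tmul_of_card_le
    (fun i j ↦ linearIndepOn_tmul_pow_pair habc hL (hpair i j)) hcard hA hB hBA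

section ProjectivePoints

variable {n : ℕ}

lemma linForm_isHomogeneous (v : Fin (n + 1) → ℂ) : (linForm n v).IsHomogeneous 1 :=
  IsHomogeneous.sum _ _ _ fun i _ ↦ isHomogeneous_C_mul_X (v i) i

lemma linForm_eq_linearCombination (v : Fin (n + 1) → ℂ) :
    linForm n v = Fintype.linearCombination ℂ X v := by
  simp only [linForm, Fintype.linearCombination_apply, smul_eq_C_mul]

lemma linearIndepOn_linForm_rep_pair (P Q : ProjPt n) :
    LinearIndepOn ℂ (fun P : ProjPt n ↦ linForm n P.rep) {P, Q} := by
  have hrep : LinearIndepOn ℂ (Projectivization.rep : ProjPt n → Fin (n + 1) → ℂ) {P, Q} := by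
    rw [linearIndepOn_iff_image (Function.LeftInverse.injective
      (g := fun v ↦ if hv : v ≠ 0 then .mk ℂ v hv else P) fun D ↦ by
        simp [D.rep_nonzero, D.mk_rep]).injOn, Set.image_pair]
    exact Projectivization.linearIndepOn_pair P Q
  simp only [linForm_eq_linearCombination]
  exact hrep.map_injOn (Fintype.linearCombination ℂ X)
    (linearIndependent_X (Fin (n + 1)) ℂ).fintypeLinearCombination_injective.injOn

lemma isMinimalDecomp_iff_minimal {d : ℕ} {T : MvPolynomial (Fin (n + 1)) ℂ}
    {A : Finset (ProjPt n)} : IsMinimalDecomp n d T A ↔ Minimal (IsDecomp n d T) A :=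
  minimal_iff_forall_lt.symm

end ProjectivePoints

/-- Reshaped Kruskal criterion: let `A` be a minimal decomposition of
`T ∈ ℙ(Symᵈ(ℂⁿ⁺¹))`, let `d = a + b + c` with `0 < a ≤ b ≤ c`, and let `k_a, k_b, k_c`
be the Kruskal ranks of `ν_a(A), ν_b(A), ν_c(A)`.  If `ℓ(A) ≤ (k_a + k_b + k_c - 2)/2`,
then `T` has rank `ℓ(A)` and is identifiable: every decomposition `B` of `T` with
`ℓ(B) ≤ ℓ(A)` equals `A`. -/
theorem reshaped_kruskal_criterion (n d a b c : ℕ) (hd : d = a + b + c)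
    (ha : 0 < a) (hab : a ≤ b) (hbc : b ≤ c)
    (T : MvPolynomial (Fin (n+1)) ℂ) (hT : T ≠ 0)
    (A : Finset (ProjPt n)) (hA : IsMinimalDecomp n d T A)
    (hcard : 2 * A.card + 2 ≤
      veroKruskalRank n a A + veroKruskalRank n b A + veroKruskalRank n c A) :
    ∀ B : Finset (ProjPt n), IsDecomp n d T B → B.card ≤ A.card → B = A := by
  subst hd
  exact fun B hB hBA ↦ reshaped_kruskal_criterion_general (L := fun P : ProjPt n ↦ linForm n P.rep)
    (Nat.cast_ne_zero.2 (Nat.factorial_ne_zero _)) (by omega) (fun P ↦ linForm_isHomogeneous P.rep)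
    linearIndepOn_linForm_rep_pair (isMinimalDecomp_iff_minimal.1 hA) hcard hB hBA
end
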